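/- arXiv:1312.0698 — 6 statements merged into one kernel-verified Lean document; each statement's English description precedes it below -/
import Mathlib

section
/- Let (P_n) be a sequence of real polynomials such that P_n has degree n and n real zeros x_{1,n} ≤ x_{2,n} ≤ … ≤ x_{n,n}, and suppose the zeros of consecutive polynomials interlace: x_{k,n} ≤ x_{k,n-1} ≤ x_{k+1,n} for all 1 ≤ k ≤ n-1 and all n. Suppose moreover that x_{k,n}/φ(n) ∈ [a,b] for every 1 ≤ k ≤ n and every n, where φ : ℕ → ℝ is a positive increasing sequence. Set a* = min{0,a} and b* = max{0,b} if φ(n) increases to ∞, and a* = a, b* = b if φ is constant. Then there exists an infinite subset Λ ⊆ ℕ and a continuous function f : [0,1] × (ℂ \ [a*,b*]) → ℂ such that lim_{n→∞, n∈Λ} (φ(n)/n) · P_{⌊nt⌋}'(φ(n)x) / P_{⌊nt⌋}(φ(n)x) = f(t,x), where the convergence is uniform for t ∈ [0,1] and for x in every compact subset of ℂ \ [a*,b*]. -/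
/-!
For `m ≤ n` the zeros of `P_m`, divided by `φ n`, lie in `[a*, b*]`, so with `m = ⌊n t⌋` the
quantity under study is the Stieltjes sum
`F_n(t, z) = (1/n) ∑_{k<m} 1 / (z - x_{m,k} / φ n)`.
If `z` has distance at least `d` from `[a*, b*]`, then `|F_n(t, z)| ≤ 1/d`, and `F_n` is Lipschitz
in `z` near such a point, uniformly in `n` and `t`. The `F_n` jump in `t`, but interlacing controls
the jumps: passing from `m` to `m + 1` zeros changes `∑ g(x_{m,k})` by at most `sup |g|` plus the
total variation of `g` (`norm_stieltjes_succ_sub_le`), so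
`|F_n(s, z) - F_n(t, z)| ≤ C (|s - t| + 1/n)`. The family is therefore pointwise bounded and
asymptotically equicontinuous, and a version of the Arzelà–Ascoli theorem
for such families (`exists_subseq_of_asymptotic_equicontinuous`) gives `Λ` and `f`.
-/

open Polynomial Filter Set

/-- Logarithmic derivative `P'(z)/P(z)` of a real polynomial `P` at a complex point `z`. -/
noncomputable def plogDeriv (P : Polynomial ℝ) (z : ℂ) : ℂ :=
  Polynomial.aeval z (Polynomial.derivative P) / Polynomial.aeval z P

/-- A closed real interval `[a, b]` viewed as a subset of `ℂ`. -/
def cIcc (a b : ℝ) : Set ℂ := (fun r : ℝ => (r : ℂ)) '' Set.Icc a b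

/-! ### Arzelà–Ascoli for asymptotically equicontinuous sequences -/

/-- Arzelà–Ascoli without continuity of the individual functions: the oscillation of `F n` near
each point of `S` only has to become small for large `n`, on a neighbourhood not depending
on `n`. -/
theorem exists_subseq_of_asymptotic_equicontinuous {X : Type*} [MetricSpace X]
    [SecondCountableTopology X] (S : Set X) (F : ℕ → X → ℂ)
    (hbd : ∀ p ∈ S, ∃ R : ℝ, ∀ n, ‖F n p‖ ≤ R)
    (heq : ∀ p ∈ S, ∀ ε > 0, ∃ U ∈ nhds p, ∀ᶠ n in atTop, ∀ q ∈ U ∩ S, ‖F n q - F n p‖ ≤ ε) :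
    ∃ Λ : Set ℕ, Λ.Infinite ∧ ∃ f : X → ℂ, ContinuousOn f S ∧
      TendstoLocallyUniformlyOn F f (atTop ⊓ 𝓟 Λ) S := by
  obtain ⟨c, hcS, hcc, hcd⟩ :=
    (TopologicalSpace.IsSeparable.of_separableSpace S).exists_countable_dense_subset
  have : Countable c := hcc.to_subtype
  choose! R hR using hbd
  -- Diagonal extraction: a product of countably many closed balls is sequentially compact.
  have hcomp : IsCompact (Set.pi univ fun q : c => Metric.closedBall (0 : ℂ) (R q)) :=
    isCompact_univ_pi fun q => isCompact_closedBall _ _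
  obtain ⟨v, -, ψ, hψ, hlim⟩ := hcomp.tendsto_subseq (x := fun n (q : c) => F n q)
    (fun n q _ => by simpa using hR q (hcS q.2) n)
  have hinf : (range ψ).Infinite := infinite_range_of_injective hψ.injective
  refine ⟨range ψ, hinf, ?_⟩
  set l : Filter ℕ := atTop ⊓ 𝓟 (range ψ) with hl
  have hlne : l.NeBot := by
    rw [hl, ← Filter.frequently_mem_iff_neBot]
    exact Nat.frequently_atTop_iff_infinite.2 hinf
  have hlat : l ≤ atTop := inf_le_left
  have hlψ : l ≤ map ψ atTop := by
    intro s hs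
    obtain ⟨J, hJ⟩ := mem_atTop_sets.1 (mem_map.1 hs)
    rw [hl, mem_inf_principal]
    filter_upwards [eventually_ge_atTop (ψ J)] with n hn
    rintro ⟨j, rfl⟩
    exact hJ j (hψ.le_iff_le.1 hn)
  have hlimc : ∀ q : c, Tendsto (fun n => F n q) l (nhds (v q)) := fun q =>
    (tendsto_map'_iff.2 ((tendsto_pi_nhds.1 hlim) q) :
      Tendsto (fun n => F n q) (map ψ atTop) _).mono_left hlψ
  have hex : ∀ p ∈ S, ∃ w, Tendsto (fun n => F n p) l (nhds w) := by
    intro p hp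
    have hC : Cauchy (map (fun n => F n p) l) := by
      rw [Metric.cauchy_iff]
      refine ⟨inferInstance, fun ε hε => ?_⟩
      obtain ⟨U, hU, hUF⟩ := heq p hp (ε / 8) (by positivity)
      obtain ⟨q, hqU, hqc⟩ := mem_closure_iff_nhds.1 (hcd hp) U hU
      have h1 := hlimc ⟨q, hqc⟩
      have h2 := (Metric.tendsto_nhds.1 h1) (ε / 8) (by positivity)
      refine ⟨Metric.ball (v ⟨q, hqc⟩) (ε / 2), ?_, ?_⟩
      · rw [mem_map]
        filter_upwards [h2, hUF.filter_mono hlat] with n hn hn'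
        have h3 := hn' q ⟨hqU, hcS hqc⟩
        rw [← dist_eq_norm] at h3
        have := dist_triangle_left (F n p) (v ⟨q, hqc⟩) (F n q)
        simp only [mem_preimage, Metric.mem_ball]
        linarith
      · intro y hy y' hy'
        have := dist_triangle_right y y' (v ⟨q, hqc⟩)
        simp only [Metric.mem_ball] at hy hy'
        linarith
    exact CompleteSpace.complete hC
  choose! f hf using hex
  have hfU : ∀ p ∈ S, ∀ ε > 0, ∃ U ∈ nhds p, (∀ᶠ n in l, ∀ q ∈ U ∩ S, ‖F n q - F n p‖ ≤ ε) ∧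
      ∀ q ∈ U ∩ S, ‖f q - f p‖ ≤ ε := by
    intro p hp ε hε
    obtain ⟨U, hU, hUF⟩ := heq p hp ε hε
    refine ⟨U, hU, hUF.filter_mono hlat, fun q hq => ?_⟩
    refine le_of_tendsto ((hf q hq.2).sub (hf p hp)).norm ?_
    filter_upwards [hUF.filter_mono hlat] with n hn using hn q hq
  refine ⟨f, ?_, ?_⟩
  · intro p hp
    rw [ContinuousWithinAt, Metric.tendsto_nhds]
    intro ε hε
    obtain ⟨U, hU, -, hUf⟩ := hfU p hp (ε / 2) (by positivity)
    filter_upwards [mem_nhdsWithin_of_mem_nhds hU, self_mem_nhdsWithin] with q hq hqS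
    rw [dist_eq_norm]
    linarith [hUf q ⟨hq, hqS⟩]
  · rw [Metric.tendstoLocallyUniformlyOn_iff]
    intro ε hε p hp
    obtain ⟨U, hU, hUF, hUf⟩ := hfU p hp (ε / 4) (by positivity)
    refine ⟨U ∩ S, inter_mem (mem_nhdsWithin_of_mem_nhds hU) self_mem_nhdsWithin, ?_⟩
    filter_upwards [hUF, (Metric.tendsto_nhds.1 (hf p hp)) (ε / 4) (by positivity)] with n h1 h2 q hq
    have h3 := h1 q hq
    have h4 := hUf q hq
    rw [← dist_eq_norm] at h3 h4
    have h5 := dist_triangle4 (f q) (f p) (F n p) (F n q)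
    rw [dist_comm (f p) (F n p), dist_comm (F n p) (F n q)] at h5
    linarith

/-! ### Logarithmic derivatives and Stieltjes sums -/

/-- The Stieltjes sum `∑_{k<m} 1 / (z - y_k)`. -/
noncomputable def stieltjes (m : ℕ) (y : ℕ → ℝ) (z : ℂ) : ℂ :=
  ∑ k ∈ Finset.range m, (z - (y k : ℂ))⁻¹

theorem plogDeriv_eq_stieltjes (c : ℝ) (hc : c ≠ 0) (m : ℕ) (y : ℕ → ℝ) (z : ℂ)
    (hz : ∀ k < m, z ≠ y k) :
    plogDeriv (C c * ∏ k ∈ Finset.range m, (X - C (y k))) z = stieltjes m y z := by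
  have key : ∀ j ≤ m, aeval z (∏ k ∈ Finset.range j, (X - C (y k))) ≠ 0 ∧
      aeval z (derivative (∏ k ∈ Finset.range j, (X - C (y k)))) =
        aeval z (∏ k ∈ Finset.range j, (X - C (y k))) * stieltjes j y z := by
    intro j
    induction j with
    | zero => intro _; simp [stieltjes]
    | succ j ih =>
      intro hj
      obtain ⟨h1, h2⟩ := ih (by omega)
      have h3 : z - (y j : ℂ) ≠ 0 := sub_ne_zero.2 (hz j (by omega))
      have h4 : aeval z (X - C (y j)) = z - (y j : ℂ) := by simp
      rw [Finset.prod_range_succ, derivative_mul, map_add, map_mul, map_mul, map_mul, h2, h4]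
      refine ⟨mul_ne_zero h1 h3, ?_⟩
      simp only [stieltjes, Finset.sum_range_succ, derivative_sub, derivative_X, derivative_C,
        sub_zero, map_one]
      field_simp
  obtain ⟨h1, h2⟩ := key m le_rfl
  have hc' : (c : ℂ) ≠ 0 := by exact_mod_cast hc
  rw [plogDeriv, derivative_C_mul, map_mul, map_mul, h2, aeval_C]
  simp only [Complex.coe_algebraMap]
  field_simp

theorem stieltjes_scale (m : ℕ) (y : ℕ → ℝ) (z : ℂ) (r : ℝ) (hr : r ≠ 0) :
    (r : ℂ) * stieltjes m y (r * z) = stieltjes m (fun k => y k / r) z := by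
  have hr' : (r : ℂ) ≠ 0 := by exact_mod_cast hr
  rw [stieltjes, stieltjes, Finset.mul_sum]
  refine Finset.sum_congr rfl fun k _ => ?_
  have : (r : ℂ) * z - y k = r * (z - ((y k / r : ℝ) : ℂ)) := by
    push_cast; field_simp
  rw [this, mul_inv, mul_inv_cancel_left₀ hr']

theorem norm_stieltjes_le (m : ℕ) (y : ℕ → ℝ) (z : ℂ) (d : ℝ) (hd : 0 < d)
    (hz : ∀ k < m, d ≤ ‖z - y k‖) : ‖stieltjes m y z‖ ≤ m * d⁻¹ := by
  refine (norm_sum_le_of_le (f := fun k => (z - (y k : ℂ))⁻¹) (Finset.range m)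
    (n := fun _ => d⁻¹) fun k hk => ?_).trans (by simp)
  rw [norm_inv]
  exact inv_anti₀ hd (hz k (Finset.mem_range.1 hk))

theorem norm_inv_sub_inv_le (u v : ℂ) (d : ℝ) (hd : 0 < d) (hu : d ≤ ‖u‖) (hv : d ≤ ‖v‖) :
    ‖u⁻¹ - v⁻¹‖ ≤ ‖u - v‖ * (d⁻¹ * d⁻¹) := by
  have hu0 : u ≠ 0 := norm_pos_iff.1 (hd.trans_le hu)
  have hv0 : v ≠ 0 := norm_pos_iff.1 (hd.trans_le hv)
  have h : u⁻¹ - v⁻¹ = (v - u) * (u⁻¹ * v⁻¹) := by field_simp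
  rw [h, norm_mul, norm_mul, norm_inv, norm_inv, norm_sub_rev]
  gcongr

theorem norm_stieltjes_sub_le (m : ℕ) (y : ℕ → ℝ) (z w : ℂ) (d : ℝ) (hd : 0 < d)
    (hz : ∀ k < m, d ≤ ‖z - y k‖) (hw : ∀ k < m, d ≤ ‖w - y k‖) :
    ‖stieltjes m y z - stieltjes m y w‖ ≤ m * (‖z - w‖ * (d⁻¹ * d⁻¹)) := by
  rw [stieltjes, stieltjes, ← Finset.sum_sub_distrib]
  refine (norm_sum_le_of_le (Finset.range m)
    (n := fun _ => ‖z - w‖ * (d⁻¹ * d⁻¹)) fun k hk => ?_).trans (by simp)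
  have hk' := Finset.mem_range.1 hk
  have := norm_inv_sub_inv_le (z - y k) (w - y k) d hd (hz k hk') (hw k hk')
  simpa using this

/-! ### The effect of interlacing -/

/-- If `y'` (of length `m`) interlaces `y` (of length `m + 1`), pair each `y'_k` with `y_{k+1}`:
the differences `y_{k+1} - y'_k ≤ y_{k+1} - y_k` telescope, and only the term of `y_0` is left
unpaired. -/
theorem norm_stieltjes_succ_sub_le (m : ℕ) (y y' : ℕ → ℝ) (A B : ℝ)
    (hy : ∀ k < m + 1, y k ∈ Icc A B)
    (hint : ∀ k < m, y k ≤ y' k ∧ y' k ≤ y (k + 1)) (z : ℂ) (d : ℝ) (hd : 0 < d)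
    (hz : ∀ u ∈ Icc A B, d ≤ ‖z - (u : ℂ)‖) :
    ‖stieltjes (m + 1) y z - stieltjes m y' z‖ ≤ d⁻¹ + (B - A) * (d⁻¹ * d⁻¹) := by
  have h0 : stieltjes (m + 1) y z - stieltjes m y' z =
      (z - (y 0 : ℂ))⁻¹ +
        ∑ k ∈ Finset.range m, ((z - (y (k + 1) : ℂ))⁻¹ - (z - (y' k : ℂ))⁻¹) := by
    rw [stieltjes, stieltjes, Finset.sum_range_succ', Finset.sum_sub_distrib]; ring
  rw [h0]
  refine (norm_add_le _ _).trans (add_le_add ?_ ?_)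
  · rw [norm_inv]
    exact inv_anti₀ hd (hz _ (hy 0 (by omega)))
  · have h1 : ∀ k ∈ Finset.range m, ‖(z - (y (k + 1) : ℂ))⁻¹ - (z - (y' k : ℂ))⁻¹‖ ≤
        (y (k + 1) - y k) * (d⁻¹ * d⁻¹) := by
      intro k hk
      have hk := Finset.mem_range.1 hk
      obtain ⟨i1, i2⟩ := hint k hk
      have m1 := hy k (by omega)
      have m2 := hy (k + 1) (by omega)
      refine (norm_inv_sub_inv_le _ _ d hd (hz _ m2)
        (hz _ ⟨m1.1.trans i1, i2.trans m2.2⟩)).trans ?_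
      gcongr
      have : z - (y (k + 1) : ℂ) - (z - (y' k : ℂ)) = ((y' k - y (k + 1) : ℝ) : ℂ) := by
        push_cast; ring
      rw [this, Complex.norm_real, Real.norm_eq_abs, abs_of_nonpos (by linarith)]
      linarith
    refine (norm_sum_le_of_le _ h1).trans ?_
    rw [← Finset.sum_mul, Finset.sum_range_sub]
    gcongr
    · exact (hy m (by omega)).2
    · exact (hy 0 (by omega)).1

theorem norm_sub_le_of_norm_succ_sub_le (G : ℕ → ℂ) (N : ℕ) (M : ℝ)
    (h : ∀ m < N, ‖G (m + 1) - G m‖ ≤ M) (i j : ℕ) (hi : i ≤ N) (hj : j ≤ N) :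
    ‖G i - G j‖ ≤ |(i : ℝ) - j| * M := by
  have key : ∀ i r, i + r ≤ N → ‖G (i + r) - G i‖ ≤ r * M := by
    intro i r
    induction r with
    | zero => intro _; simp
    | succ r ih =>
      intro hr
      have h1 := ih (by omega)
      have h2 := h (i + r) (by omega)
      have h3 := norm_sub_le_norm_sub_add_norm_sub (G (i + r + 1)) (G (i + r)) (G i)
      rw [← add_assoc]; push_cast; linarith
  rcases le_total i j with hij | hij
  · obtain ⟨r, rfl⟩ := Nat.exists_eq_add_of_le hij
    rw [norm_sub_rev]
    simpa using key i r hj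
  · obtain ⟨r, rfl⟩ := Nat.exists_eq_add_of_le hij
    simpa using key j r hi

theorem floor_mul_le (n : ℕ) (t : ℝ) (ht : t ∈ Icc (0 : ℝ) 1) : ⌊(n : ℝ) * t⌋₊ ≤ n := by
  refine Nat.floor_le_of_le ?_
  nlinarith [ht.1, ht.2, (Nat.cast_nonneg n : (0 : ℝ) ≤ n)]

theorem abs_floor_mul_sub_le (n : ℕ) (s t : ℝ) (hs : 0 ≤ s) (ht : 0 ≤ t) :
    |((⌊(n : ℝ) * s⌋₊ : ℕ) : ℝ) - (⌊(n : ℝ) * t⌋₊ : ℕ)| ≤ n * |s - t| + 1 := by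
  have h1 := Nat.floor_le (mul_nonneg (Nat.cast_nonneg (α := ℝ) n) hs)
  have h2 := Nat.floor_le (mul_nonneg (Nat.cast_nonneg (α := ℝ) n) ht)
  have h3 := Nat.lt_floor_add_one ((n : ℝ) * s)
  have h4 := Nat.lt_floor_add_one ((n : ℝ) * t)
  have h5 : (n : ℝ) * |s - t| = |(n : ℝ) * s - n * t| := by
    rw [← mul_sub, abs_mul, Nat.abs_cast]
  rw [h5, abs_le]
  have h6 := le_abs_self ((n : ℝ) * s - n * t)
  have h7 := neg_abs_le ((n : ℝ) * s - n * t)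
  constructor <;> linarith

theorem isClosed_cIcc (a b : ℝ) : IsClosed (cIcc a b) :=
  (isCompact_Icc.image Complex.continuous_ofReal).isClosed

theorem exists_dist_cIcc (A B : ℝ) (z : ℂ) (hz : z ∈ (cIcc A B)ᶜ) :
    ∃ d > 0, ∀ w ∈ Metric.ball z d, ∀ u ∈ Icc A B, d ≤ ‖w - (u : ℂ)‖ := by
  obtain ⟨r, hr, hrs⟩ := Metric.isOpen_iff.1 (isClosed_cIcc A B).isOpen_compl z hz
  refine ⟨r / 2, by positivity, fun w hw u hu => ?_⟩
  by_contra! hlt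
  refine hrs (show (u : ℂ) ∈ Metric.ball z r from ?_) ⟨u, hu, rfl⟩
  rw [← dist_eq_norm] at hlt
  have := dist_triangle_left (u : ℂ) z w
  rw [Metric.mem_ball] at hw ⊢
  linarith

/-- In the case `φ → ∞`, the zeros of `P_m` scaled by `φ n ≥ φ m` are convex combinations of `0`
and points of `[a, b]`. -/
theorem scaled_zero_mem (x : ℕ → ℕ → ℝ) (φ : ℕ → ℝ) (a b astar bstar : ℝ)
    (hφpos : ∀ n, 0 < φ n) (hφmono : Monotone φ)
    (hbound : ∀ n k, k < n → x n k / φ n ∈ Set.Icc a b)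
    (hstar : (Tendsto φ atTop atTop ∧ astar = min 0 a ∧ bstar = max 0 b) ∨
      ((∀ m n, φ m = φ n) ∧ astar = a ∧ bstar = b))
    (n m k : ℕ) (hm : m ≤ n) (hk : k < m) : x m k / φ n ∈ Icc astar bstar := by
  have hb := hbound m k hk
  rcases hstar with ⟨-, rfl, rfl⟩ | ⟨hc, rfl, rfl⟩
  · have h1 : x m k / φ n = x m k / φ m * (φ m / φ n) := by
      have := (hφpos m).ne'
      field_simp
    have h2 : 0 ≤ φ m / φ n := (div_pos (hφpos m) (hφpos n)).le
    have h3 : φ m / φ n ≤ 1 := (div_le_one (hφpos n)).2 (hφmono hm)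
    rw [h1]
    have e1 : min 0 a ≤ 0 := min_le_left _ _
    have e2 : min 0 a ≤ x m k / φ m := (min_le_right _ _).trans hb.1
    have e3 : 0 ≤ max 0 b := le_max_left _ _
    have e4 : x m k / φ m ≤ max 0 b := hb.2.trans (le_max_right _ _)
    constructor <;> nlinarith
  · rwa [hc n m]

/-! ### The limit theorem -/

/-- for a sequence of real polynomials `P n` of degree `n` with ordered,
interlacing real zeros `x n 0 ≤ … ≤ x n (n-1)` (here `x n k` is `x_{k+1,n}`), all scaled zeros
`x n k / φ n` in `[a, b]` with `φ` positive and increasing, and with `a* = min{0,a}`,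
`b* = max{0,b}` when `φ → ∞` and `a* = a`, `b* = b` when `φ` is constant, there is an infinite
`Λ ⊆ ℕ` and a continuous `f` on `[0,1] × (ℂ \ [a*,b*])` such that
`(φ(n)/n) P_{⌊nt⌋}'(φ(n)x)/P_{⌊nt⌋}(φ(n)x) → f(t,x)` along `Λ`, uniformly for `t ∈ [0,1]` and
`x` in every compact subset of `ℂ \ [a*,b*]`. -/
theorem stmt0 (P : ℕ → Polynomial ℝ) (x : ℕ → ℕ → ℝ) (φ : ℕ → ℝ)
    (a b astar bstar : ℝ)
    (hroots : ∀ n, ∃ c : ℝ, c ≠ 0 ∧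
      P n = Polynomial.C c * ∏ k ∈ Finset.range n, (Polynomial.X - Polynomial.C (x n k)))
    (hsorted : ∀ n k, k + 1 < n → x n k ≤ x n (k + 1))
    (hinter : ∀ n k, k < n → x (n + 1) k ≤ x n k ∧ x n k ≤ x (n + 1) (k + 1))
    (hφpos : ∀ n, 0 < φ n) (hφmono : Monotone φ)
    (hbound : ∀ n k, k < n → x n k / φ n ∈ Set.Icc a b)
    (hstar : (Tendsto φ atTop atTop ∧ astar = min 0 a ∧ bstar = max 0 b) ∨
      ((∀ m n, φ m = φ n) ∧ astar = a ∧ bstar = b)) :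
    ∃ Λ : Set ℕ, Λ.Infinite ∧ ∃ f : ℝ → ℂ → ℂ,
      ContinuousOn (fun p : ℝ × ℂ => f p.1 p.2)
        (Set.Icc (0 : ℝ) 1 ×ˢ (cIcc astar bstar)ᶜ) ∧
      ∀ K : Set ℂ, IsCompact K → K ⊆ (cIcc astar bstar)ᶜ →
        TendstoUniformlyOn
          (fun (n : ℕ) (p : ℝ × ℂ) =>
            ((φ n / n : ℝ) : ℂ) * plogDeriv (P ⌊(n : ℝ) * p.1⌋₊) ((φ n : ℂ) * p.2))
          (fun p => f p.1 p.2) (atTop ⊓ 𝓟 Λ) (Set.Icc (0 : ℝ) 1 ×ˢ K) := by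
  have hmem := scaled_zero_mem x φ a b astar bstar hφpos hφmono hbound hstar
  set S : Set (ℝ × ℂ) := Icc (0 : ℝ) 1 ×ˢ (cIcc astar bstar)ᶜ with hS
  set F : ℕ → ℝ × ℂ → ℂ := fun n p =>
    ((φ n / n : ℝ) : ℂ) * plogDeriv (P ⌊(n : ℝ) * p.1⌋₊) ((φ n : ℂ) * p.2) with hF
  let y : ℕ → ℕ → ℕ → ℝ := fun n m k => x m k / φ n
  have hFS : ∀ n, ∀ p ∈ S, F n p =
      ((n : ℂ))⁻¹ * stieltjes ⌊(n : ℝ) * p.1⌋₊ (y n ⌊(n : ℝ) * p.1⌋₊) p.2 := by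
    rintro n ⟨t, z⟩ ⟨ht, hz⟩
    obtain ⟨c, hc, hP⟩ := hroots ⌊(n : ℝ) * t⌋₊
    have hφ : (φ n : ℂ) ≠ 0 := by exact_mod_cast (hφpos n).ne'
    simp only [hF]
    rw [hP, plogDeriv_eq_stieltjes c hc, ← stieltjes_scale _ _ _ _ (hφpos n).ne']
    · push_cast; ring
    · intro k hk h
      refine hz ⟨_, hmem n _ k (floor_mul_le n t ht) hk, ?_⟩
      push_cast
      rw [← h]; field_simp
  have hfl : ∀ (n : ℕ) (t : ℝ), t ∈ Icc (0 : ℝ) 1 →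
      (n : ℝ)⁻¹ * (⌊(n : ℝ) * t⌋₊ : ℕ) ≤ 1 := by
    intro n t ht
    rw [inv_mul_eq_div]
    exact div_le_one_of_le₀ (by exact_mod_cast floor_mul_le n t ht) (Nat.cast_nonneg n)
  have hAB : astar ≤ bstar := by
    have := hmem 1 1 0 le_rfl one_pos
    exact this.1.trans this.2
  have hbd : ∀ p ∈ S, ∃ R : ℝ, ∀ n, ‖F n p‖ ≤ R := by
    rintro ⟨t, z⟩ hp
    obtain ⟨d, hd, hdz⟩ := exists_dist_cIcc astar bstar z hp.2
    refine ⟨d⁻¹, fun n => ?_⟩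
    rw [hFS n _ hp, norm_mul, norm_inv, Complex.norm_natCast]
    have h1 := norm_stieltjes_le ⌊(n : ℝ) * t⌋₊ (y n ⌊(n : ℝ) * t⌋₊) z d hd fun k hk =>
      hdz z (Metric.mem_ball_self hd) _ (hmem n _ k (floor_mul_le n t hp.1) hk)
    calc _ ≤ (n : ℝ)⁻¹ * ((⌊(n : ℝ) * t⌋₊ : ℕ) * d⁻¹) := by gcongr
      _ = ((n : ℝ)⁻¹ * (⌊(n : ℝ) * t⌋₊ : ℕ)) * d⁻¹ := by ring
      _ ≤ 1 * d⁻¹ := by gcongr; exact hfl n t hp.1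
      _ = d⁻¹ := one_mul _
  have heq : ∀ p ∈ S, ∀ ε > 0, ∃ U ∈ nhds p, ∀ᶠ n in atTop, ∀ q ∈ U ∩ S,
      ‖F n q - F n p‖ ≤ ε := by
    rintro ⟨t, z⟩ hp ε hε
    obtain ⟨d, hd, hdz⟩ := exists_dist_cIcc astar bstar z hp.2
    set M : ℝ := d⁻¹ + (bstar - astar) * (d⁻¹ * d⁻¹) with hM
    have hM0 : 0 < M := by
      have : 0 ≤ bstar - astar := by linarith
      positivity
    have hdd : 0 < d⁻¹ * d⁻¹ := by positivity
    refine ⟨Metric.ball t (ε / 3 / M) ×ˢ Metric.ball z (min d (ε / 3 / (d⁻¹ * d⁻¹))),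
      prod_mem_nhds (Metric.ball_mem_nhds _ (by positivity))
        (Metric.ball_mem_nhds _ (by positivity)), ?_⟩
    have hlim : Tendsto (fun n : ℕ => (n : ℝ)⁻¹ * M) atTop (nhds 0) := by
      simpa using (tendsto_inv_atTop_nhds_zero_nat (𝕜 := ℝ)).mul_const M
    filter_upwards [eventually_gt_atTop 0, hlim.eventually (gt_mem_nhds (show 0 < ε / 3 by positivity))]
      with n hn hnM
    rintro ⟨s, w⟩ ⟨⟨hs, hw⟩, hq⟩
    have hn' : (0 : ℝ) < n := by exact_mod_cast hn
    simp only [Metric.mem_ball, dist_eq_norm, lt_min_iff, Real.norm_eq_abs] at hs hw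
    set i := ⌊(n : ℝ) * s⌋₊ with hi
    set j := ⌊(n : ℝ) * t⌋₊ with hj
    have hin : i ≤ n := floor_mul_le n s hq.1
    have hjn : j ≤ n := floor_mul_le n t hp.1
    have hzd := hdz z (Metric.mem_ball_self hd)
    have hwd := hdz w (by rw [Metric.mem_ball, dist_eq_norm]; exact hw.1)
    have h1 := norm_stieltjes_sub_le i (y n i) w z d hd
      (fun k hk => hwd _ (hmem n i k hin hk)) (fun k hk => hzd _ (hmem n i k hin hk))
    have h2 := norm_sub_le_of_norm_succ_sub_le (fun m => stieltjes m (y n m) z) n M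
      (fun m hm => norm_stieltjes_succ_sub_le m (y n (m + 1)) (y n m) astar bstar
        (fun k hk => hmem n (m + 1) k hm hk)
        (fun k hk => ⟨div_le_div_of_nonneg_right (hinter m k hk).1 (hφpos n).le,
          div_le_div_of_nonneg_right (hinter m k hk).2 (hφpos n).le⟩) z d hd hzd) i j hin hjn
    have h3 := abs_floor_mul_sub_le n s t hq.1.1 hp.1.1
    rw [hFS n _ hq, hFS n _ hp, ← mul_sub, norm_mul, norm_inv, Complex.norm_natCast]
    have h4 := norm_sub_le_norm_sub_add_norm_sub (stieltjes i (y n i) w) (stieltjes i (y n i) z)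
      (stieltjes j (y n j) z)
    have h5 : ‖stieltjes i (y n i) w - stieltjes j (y n j) z‖ ≤
        i * (‖w - z‖ * (d⁻¹ * d⁻¹)) + (n * |s - t| + 1) * M :=
      h4.trans (add_le_add h1 (h2.trans (by gcongr)))
    have h6 : ‖w - z‖ * (d⁻¹ * d⁻¹) ≤ ε / 3 := ((lt_div_iff₀ hdd).1 hw.2).le
    have h7 : |s - t| * M ≤ ε / 3 := ((lt_div_iff₀ hM0).1 hs).le
    calc (n : ℝ)⁻¹ * ‖stieltjes i (y n i) w - stieltjes j (y n j) z‖
        ≤ (n : ℝ)⁻¹ * (i * (‖w - z‖ * (d⁻¹ * d⁻¹)) + (n * |s - t| + 1) * M) := by gcongr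
      _ = ((n : ℝ)⁻¹ * i) * (‖w - z‖ * (d⁻¹ * d⁻¹)) + (|s - t| * M + (n : ℝ)⁻¹ * M) := by
          field_simp
      _ ≤ 1 * (ε / 3) + (ε / 3 + ε / 3) := by
          gcongr
          exact hfl n s hq.1
      _ = ε := by ring
  obtain ⟨Λ, hΛ, f, hfc, hft⟩ :=
    exists_subseq_of_asymptotic_equicontinuous S F hbd heq
  refine ⟨Λ, hΛ, fun t z => f (t, z), hfc, fun K hK hKs => ?_⟩
  have hcomp : IsCompact (Icc (0 : ℝ) 1 ×ˢ K) := isCompact_Icc.prod hK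
  exact (tendstoLocallyUniformlyOn_iff_tendstoUniformlyOn_of_compact hcomp).1
    (hft.mono (prod_mono le_rfl hKs))
end

section
/- Let σ ≥ 0 and let a₂, a₁, a₀, b₁, b₀ be real numbers with −(a₂ + b₁)/(σ(a₂ + b₁) + a₂) not a positive integer (and σ(a₂+b₁)+a₂ ≠ 0). Then for every integer n ≥ 2 the quantity a₂(n−1) + (σn − σ + 1)(a₂ + b₁) is nonzero, and consequently there exists a unique sequence (c_n)_{n≥0} with c₀ = 0 and c₁ = 1 satisfying, for all n ≥ 2, the recurrence [a₂(n−1) + (σn−σ+1)(a₂+b₁)] c_n = [(2σ−1−σn)(a₁+b₀) − a₁(n−2)] c_{n−1} − a₀(n−2) c_{n−2} − Σ_{k=0}^{n−3} [ (σk+1) c_{k+1} (a₀ c_{n−2−k} + a₁ c_{n−1−k}) + a₂ (σk+σ+1) c_{k+2} c_{n−1−k} ]. -/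
/-!
With `D = σ (a₂ + b₁) + a₂`, the leading coefficient equals `(n - 1) D + (a₂ + b₁)`, so it vanishes
only if `-(a₂ + b₁) / D = n - 1`, which is excluded since `n - 1` is a positive integer. Dividing by
it, the recurrence expresses `c n` through `c m` with `m < n` only: the indices occurring in the sum
over `k ≤ n - 3` are all at most `n - 1`. Existence and uniqueness then follow by strong recursion
(`existsUnique_of_causal`).
-/

/-- A recursion `c n = F n c` whose right-hand side depends only on the values `c m`, `m < n`,
has exactly one solution. -/
theorem existsUnique_of_causal {α : Type*} [Inhabited α] (F : ℕ → (ℕ → α) → α)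
    (hF : ∀ n c d, (∀ m < n, c m = d m) → F n c = F n d) :
    ∃! c : ℕ → α, ∀ n, c n = F n c := by
  -- Later values of the sequence are replaced by a default; by `hF` they do not matter.
  let G : (n : ℕ) → ((m : ℕ) → m < n → α) → α :=
    fun n ih => F n (fun m => if h : m < n then ih m h else default)
  refine ⟨fun n => (Nat.lt_wfRel.wf).fix G n, fun n => ?_, fun d hd => ?_⟩
  · change (Nat.lt_wfRel.wf).fix G n = _
    rw [WellFounded.fix_eq]
    refine hF n _ _ fun m hm => ?_
    simp [hm]
  · funext n
    induction n using Nat.strong_induction_on with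
    | _ n ih =>
      rw [WellFounded.fix_eq, hd n]
      refine hF n _ _ fun m hm => ?_
      simpa [hm] using ih m hm

/-- Let `σ ≥ 0` and `a₂ a₁ a₀ b₁ b₀` real with
`−(a₂ + b₁)/(σ(a₂ + b₁) + a₂)` not a positive integer (and `σ(a₂+b₁)+a₂ ≠ 0`). Then for every
`n ≥ 2` the coefficient `a₂(n−1) + (σn − σ + 1)(a₂ + b₁)` is nonzero, and there exists a unique
sequence `(c_n)` with `c₀ = 0`, `c₁ = 1` satisfying the stated recurrence for all `n ≥ 2`. -/
theorem stmt7 (σ a₂ a₁ a₀ b₁ b₀ : ℝ) (hσ : 0 ≤ σ)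
    (hden : σ * (a₂ + b₁) + a₂ ≠ 0)
    (hnat : ∀ m : ℕ, 0 < m → -(a₂ + b₁) / (σ * (a₂ + b₁) + a₂) ≠ (m : ℝ)) :
    (∀ n : ℕ, 2 ≤ n → a₂ * ((n : ℝ) - 1) + (σ * n - σ + 1) * (a₂ + b₁) ≠ 0) ∧
    (∃! c : ℕ → ℝ, c 0 = 0 ∧ c 1 = 1 ∧ ∀ n : ℕ, 2 ≤ n →
      (a₂ * ((n : ℝ) - 1) + (σ * n - σ + 1) * (a₂ + b₁)) * c n
        = ((2 * σ - 1 - σ * n) * (a₁ + b₀) - a₁ * ((n : ℝ) - 2)) * c (n - 1)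
          - a₀ * ((n : ℝ) - 2) * c (n - 2)
          - ∑ k ∈ Finset.range (n - 2),
              ((σ * k + 1) * c (k + 1) * (a₀ * c (n - 2 - k) + a₁ * c (n - 1 - k))
                + a₂ * (σ * k + σ + 1) * c (k + 2) * c (n - 1 - k))) := by
  have hne : ∀ n : ℕ, 2 ≤ n → a₂ * ((n : ℝ) - 1) + (σ * n - σ + 1) * (a₂ + b₁) ≠ 0 := by
    intro n hn h
    apply hnat (n - 1) (by omega)
    rw [div_eq_iff hden, Nat.cast_sub (by omega), Nat.cast_one]
    linarith
  refine ⟨hne, ?_⟩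
  let R : ℕ → (ℕ → ℝ) → ℝ := fun n c =>
    ((2 * σ - 1 - σ * n) * (a₁ + b₀) - a₁ * ((n : ℝ) - 2)) * c (n - 1)
      - a₀ * ((n : ℝ) - 2) * c (n - 2)
      - ∑ k ∈ Finset.range (n - 2),
          ((σ * k + 1) * c (k + 1) * (a₀ * c (n - 2 - k) + a₁ * c (n - 1 - k))
            + a₂ * (σ * k + σ + 1) * c (k + 2) * c (n - 1 - k))
  have hR : ∀ n c d, 2 ≤ n → (∀ m < n, c m = d m) → R n c = R n d := by
    intro n c d hn h
    simp only [R]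
    rw [h (n - 1) (by omega), h (n - 2) (by omega)]
    congr 1
    refine Finset.sum_congr rfl fun k hk => ?_
    rw [Finset.mem_range] at hk
    rw [h (k + 1) (by omega), h (n - 2 - k) (by omega), h (n - 1 - k) (by omega),
      h (k + 2) (by omega)]
  -- The recurrence solved for `c n`, with the initial values built in.
  let F : ℕ → (ℕ → ℝ) → ℝ := fun n c =>
    if n = 0 then 0 else if n = 1 then 1 else
      R n c / (a₂ * ((n : ℝ) - 1) + (σ * n - σ + 1) * (a₂ + b₁))
  have hF : ∀ n c d, (∀ m < n, c m = d m) → F n c = F n d := by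
    intro n c d h
    simp only [F]
    split_ifs with h0 h1
    · rfl
    · rfl
    · rw [hR n c d (by omega) h]
  refine (existsUnique_congr fun c => ?_).mp (existsUnique_of_causal F hF)
  change (∀ n, c n = F n c) ↔ (c 0 = 0 ∧ c 1 = 1 ∧ ∀ n : ℕ, 2 ≤ n →
    (a₂ * ((n : ℝ) - 1) + (σ * n - σ + 1) * (a₂ + b₁)) * c n = R n c)
  constructor
  · intro h
    refine ⟨by simpa [F] using h 0, by simpa [F] using h 1, fun n hn => ?_⟩
    have hn' := h n
    simp only [F] at hn'
    rw [if_neg (by omega), if_neg (by omega), eq_div_iff (hne n hn)] at hn'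
    rw [mul_comm, hn']
  · rintro ⟨h0, h1, h⟩ n
    simp only [F]
    split_ifs with hn0 hn1
    · rw [hn0, h0]
    · rw [hn1, h1]
    · have hn : 2 ≤ n := by omega
      rw [eq_div_iff (hne n hn), mul_comm, h n hn]
end

section
/- Let σ ≥ 0, let I ⊆ (0,∞) (or any interval avoiding 0) and let a, b : I → ℝ be differentiable with a(z) ≠ 0 on I. Suppose S : I → ℝ is differentiable and satisfies the Abel equation [zσ(a(z)S(z) + b(z)) + a(z)] S'(z) = (1−σ) S(z) (a(z)S(z) + b(z)) − (b'(z) + S(z) a'(z)), and that S(z) ≠ S_p(z) := −b(z)/a(z) on I. Then the function y(z) = 1/(S(z) − S_p(z)) satisfies (y(z) + σz) y'(z) = [σ z S_p'(z) + (σ−1) S_p(z) + a'(z)/a(z)] y(z)² + (σ−1) y(z). -/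
/-!
Write `P = S_p` and `D = S - P`, so that `y = 1 / D`, `y' = -(S' - P') / D ^ 2`, `b = -a P`
and `b' = -(a' P + a P')`. Then `a S + b = a D`, and dividing the Abel equation by `a` gives
`(z σ D + 1) S' = (1 - σ) S D + P' - (a' / a) D`.
Multiplying `y'` by `y + σ z = (1 + σ z D) / D` and substituting this, the two terms `P'` cancel,
one factor `D` drops out, and `S = P + 1 / y` yields the claim.
-/

/-- Let `σ ≥ 0`, `I` an interval avoiding `0`, `a b : I → ℝ` differentiable
(derivatives `a', b'`) with `a(z) ≠ 0` on `I`. Suppose `S` is differentiable (derivative `S'`)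
and satisfies the Abel equation
`[zσ(aS + b) + a] S' = (1 − σ) S (aS + b) − (b' + S a')` on `I`, and `S ≠ S_p := −b/a` on `I`
(with `S_p` having derivative `S_p'`). Then `y = 1/(S − S_p)` satisfies
`(y + σz) y' = [σ z S_p' + (σ − 1) S_p + a'/a] y² + (σ − 1) y`. -/
theorem stmt10 (σ : ℝ) (hσ : 0 ≤ σ) (I : Set ℝ) (hI : IsOpen I) (hI0 : (0 : ℝ) ∉ I)
    (a b a' b' S S' Sp' : ℝ → ℝ)
    (ha : ∀ z ∈ I, HasDerivAt a (a' z) z)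
    (hb : ∀ z ∈ I, HasDerivAt b (b' z) z)
    (ha0 : ∀ z ∈ I, a z ≠ 0)
    (hS : ∀ z ∈ I, HasDerivAt S (S' z) z)
    (habel : ∀ z ∈ I,
      (z * σ * (a z * S z + b z) + a z) * S' z
        = (1 - σ) * S z * (a z * S z + b z) - (b' z + S z * a' z))
    (hSp : ∀ z ∈ I, S z ≠ -b z / a z)
    (hSp' : ∀ z ∈ I, HasDerivAt (fun w : ℝ => -b w / a w) (Sp' z) z) :
    ∀ z ∈ I, ∃ y' : ℝ,
      HasDerivAt (fun w : ℝ => 1 / (S w - (-b w / a w))) y' z ∧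
      (1 / (S z - (-b z / a z)) + σ * z) * y'
        = (σ * z * Sp' z + (σ - 1) * (-b z / a z) + a' z / a z)
            * (1 / (S z - (-b z / a z))) ^ 2
          + (σ - 1) * (1 / (S z - (-b z / a z))) := by
  intro z hz
  have hA : a z ≠ 0 := ha0 z hz
  have hD : S z - (-b z / a z) ≠ 0 := sub_ne_zero.mpr (hSp z hz)
  have hder := ((hS z hz).sub (hSp' z hz)).inv hD
  refine ⟨-(S' z - Sp' z) / (S z - (-b z / a z)) ^ 2, ?_, ?_⟩
  · simp only [one_div]
    exact hder
  -- `P'` is computed by the quotient rule, which ties it to `a'` and `b'`.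
  have hP' : Sp' z = (-b' z * a z - -b z * a' z) / a z ^ 2 :=
    (hSp' z hz).unique ((hb z hz).neg.div (ha z hz) hA)
  have hE := habel z hz
  have hbP : b z = -(a z * (-b z / a z)) := by field_simp
  have hb' : b' z = -(a' z * (-b z / a z) + a z * Sp' z) := by
    rw [hP']; field_simp; ring
  generalize -b z / a z = P at *
  rw [hbP, hb'] at hE
  obtain ⟨D, hDS⟩ : ∃ D, D = S z - P := ⟨_, rfl⟩
  rw [← hDS] at hD ⊢
  have hSD : S z = P + D := by rw [hDS]; ring
  rw [hSD] at hE
  have hAbel : (z * σ * D + 1) * S' z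
      = (1 - σ) * (P + D) * D + Sp' z - a' z / a z * D := by
    field_simp
    linear_combination hE
  generalize a' z / a z = α at *
  field_simp
  linear_combination -hAbel
end

section
/- For every real x > 4, one has (1/(2π)) ∫_{0}^{4} (√(4 − t)/√t) · 1/(x − t) dt = (1 − √(1 − 4/x))/2. -/
/-!
The integrand has an explicit antiderivative. With `w = √t √(4 - t)` it equals
`1 / w - (x - 4) / ((x - t) w)`. The first term is the derivative of `arcsin (t / 2 - 1)`. For the
second, the Möbius map `g t = ((x - 2) t - 2 x) / (2 (x - t))` sends `0, 4` to `-1, 1` and satisfies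
`1 - g² = x (x - 4) t (4 - t) / (4 (x - t)²)`, so with `s = √(1 - 4 / x)` it is the derivative of
`s * arcsin (g t)`. Both arcsines increase by `π` on `[0, 4]`, so the integral is `π (1 - s)`.
The antiderivative is continuous up to the endpoints and its derivative is nonnegative, which gives
integrability at the singularity `t = 0`.
-/

/-- Chain rule for `arcsin` at a point where `√(1 - u²)` is known to be a positive number `r`. -/
lemma hasDerivAt_arcsin_comp {u : ℝ → ℝ} {u' t r : ℝ} (hu : HasDerivAt u u' t) (hr : 0 < r)
    (h : 1 - u t ^ 2 = r ^ 2) : HasDerivAt (fun y => Real.arcsin (u y)) (u' / r) t := by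
  have h1 : u t ≠ -1 := by
    intro h1
    rw [h1] at h
    nlinarith
  have h2 : u t ≠ 1 := by
    intro h2
    rw [h2] at h
    nlinarith
  have key := (Real.hasDerivAt_arcsin h1 h2).comp t hu
  rw [h, Real.sqrt_sq hr.le] at key
  exact key.congr_deriv (by ring)

/-- For every real `x > 4`,
`(1/(2π)) ∫₀⁴ (√(4 − t)/√t) · 1/(x − t) dt = (1 − √(1 − 4/x))/2`. -/
theorem stmt14 (x : ℝ) (hx : 4 < x) :
    (1 / (2 * Real.pi)) * ∫ t in (0 : ℝ)..4, (Real.sqrt (4 - t) / Real.sqrt t) * (1 / (x - t))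
      = (1 - Real.sqrt (1 - 4 / x)) / 2 := by
  have hx0 : 0 < x := by linarith
  have hpos : 0 < 1 - 4 / x := by
    rw [sub_pos, div_lt_one hx0]
    exact hx
  set s := Real.sqrt (1 - 4 / x) with hs
  have hs0 : 0 < s := Real.sqrt_pos.2 hpos
  have hs2 : x * s ^ 2 = x - 4 := by
    rw [hs, Real.sq_sqrt hpos.le]
    field_simp
  set F : ℝ → ℝ := fun t => Real.arcsin (t / 2 - 1)
    - s * Real.arcsin (((x - 2) * t - 2 * x) / (2 * (x - t))) with hF
  have hcont : ContinuousOn F (Set.Icc 0 4) := by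
    refine ContinuousOn.sub (Real.continuous_arcsin.comp_continuousOn (by fun_prop))
      (continuousOn_const.mul (Real.continuous_arcsin.comp_continuousOn
        (ContinuousOn.div (by fun_prop) (by fun_prop) ?_)))
    intro t ht
    have := ht.2
    exact ne_of_gt (by linarith)
  have hder : ∀ t ∈ Set.Ioo (0 : ℝ) 4,
      HasDerivAt F ((Real.sqrt (4 - t) / Real.sqrt t) * (1 / (x - t))) t := by
    intro t ⟨h0, h4⟩
    have hxt : 0 < x - t := by linarith
    have hp0 : 0 < Real.sqrt t := Real.sqrt_pos.2 h0
    have hq0 : 0 < Real.sqrt (4 - t) := Real.sqrt_pos.2 (by linarith)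
    have hp2 : Real.sqrt t ^ 2 = t := Real.sq_sqrt h0.le
    have hq2 : Real.sqrt (4 - t) ^ 2 = 4 - t := Real.sq_sqrt (by linarith)
    set p := Real.sqrt t
    set q := Real.sqrt (4 - t)
    have d1 : HasDerivAt (fun y : ℝ => y / 2 - 1) (1 / 2) t :=
      ((hasDerivAt_id t).div_const 2).sub_const 1
    have e1 := hasDerivAt_arcsin_comp d1 (r := p * q / 2) (by positivity) (by
      rw [div_pow, mul_pow, hp2, hq2]
      ring)
    have n2 : HasDerivAt (fun y : ℝ => (x - 2) * y - 2 * x) (x - 2) t := by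
      simpa using ((hasDerivAt_id t).const_mul (x - 2)).sub_const (2 * x)
    have m2 : HasDerivAt (fun y : ℝ => 2 * (x - y)) (-2) t := by
      simpa using ((hasDerivAt_id t).const_sub x).const_mul 2
    have e2 := hasDerivAt_arcsin_comp (n2.div m2 (by positivity))
      (r := x * s * (p * q) / (2 * (x - t))) (by positivity) (by
        have : (x * s * (p * q)) ^ 2 = x * (x - 4) * (t * (4 - t)) := by
          rw [mul_pow, mul_pow, mul_pow, hp2, hq2, ← hs2]
          ring
        rw [div_pow, this]
        simp only [Pi.div_apply]
        field_simp
        ring)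
    refine (e1.sub (e2.const_mul s)).congr_deriv ?_
    have hq2' : q ^ 2 = (x - t) - (x - 4) := by
      rw [hq2]
      ring
    field_simp
    rw [hq2']
    ring
  have hnn : ∀ t ∈ Set.Ioo (0 : ℝ) 4,
      0 ≤ (Real.sqrt (4 - t) / Real.sqrt t) * (1 / (x - t)) := by
    intro t ⟨h0, h4⟩
    have hxt : 0 < x - t := by linarith
    positivity
  have hint : IntervalIntegrable
      (fun t => (Real.sqrt (4 - t) / Real.sqrt t) * (1 / (x - t))) MeasureTheory.volume 0 4 :=
    (intervalIntegrable_iff_integrableOn_Ioc_of_le (by norm_num)).2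
      (intervalIntegral.integrableOn_deriv_of_nonneg hcont hder hnn)
  rw [intervalIntegral.integral_eq_sub_of_hasDerivAt_of_le (by norm_num) hcont hder hint]
  have F4 : F 4 = Real.pi / 2 - s * (Real.pi / 2) := by
    have h : ((x - 2) * 4 - 2 * x) / (2 * (x - 4)) = 1 := by
      rw [div_eq_one_iff_eq (ne_of_gt (by linarith))]
      ring
    have h' : (4 : ℝ) / 2 - 1 = 1 := by norm_num
    simp only [hF, h, h', Real.arcsin_one]
  have F0 : F 0 = -(Real.pi / 2) - s * -(Real.pi / 2) := by
    have h : ((x - 2) * 0 - 2 * x) / (2 * (x - 0)) = -1 := by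
      rw [div_eq_iff (ne_of_gt (by linarith))]
      ring
    have h' : (0 : ℝ) / 2 - 1 = -1 := by norm_num
    simp only [hF, h, h', Real.arcsin_neg_one]
  rw [F4, F0]
  have := Real.pi_pos
  field_simp
  ring
end

section
/- Let C be a real constant, let I ⊆ ℝ be an open interval, and let g : I → ℝ be a differentiable function satisfying g(x) e^{g(x)} = C x for all x ∈ I, with g(x) ≠ 0 and g(x) ≠ −1 on I. Then the function w(x) = (x/2)(1 + 1/g(x)) satisfies the canonical Abel equation w(x)(w'(x) − 1) = −x/4 on I. -/
/-!
Differentiating `g e^g = C x` gives `g' (1 + g) e^g = C`; multiplying by `x` and cancelling `e^g`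
yields `x g' (1 + g) = g`. Hence `w' = (1 + 1/g)/2 - x g'/(2 g²)` satisfies
`w' - 1 = -g / (2 (1 + g))`, and the product with `w = x (1 + g) / (2 g)` is `-x/4`.
-/


/-- Let `C` be a real constant, `I ⊆ ℝ` an open interval, and `g : I → ℝ`
differentiable with `g(x) e^{g(x)} = C x`, `g(x) ≠ 0` and `g(x) ≠ −1` on `I`. Then
`w(x) = (x/2)(1 + 1/g(x))` satisfies the canonical Abel equation `w(w' − 1) = −x/4` on `I`. -/
theorem stmt17 (C : ℝ) (I : Set ℝ) (hI : IsOpen I) (hI' : ∃ a b : ℝ, I = Set.Ioo a b)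
    (g : ℝ → ℝ)
    (hg : ∀ x ∈ I, DifferentiableAt ℝ g x)
    (hgeq : ∀ x ∈ I, g x * Real.exp (g x) = C * x)
    (hg0 : ∀ x ∈ I, g x ≠ 0) (hg1 : ∀ x ∈ I, g x ≠ -1) :
    ∀ x ∈ I,
      (x / 2) * (1 + 1 / g x) *
        (deriv (fun y : ℝ => (y / 2) * (1 + 1 / g y)) x - 1) = -x / 4 := by
  intro x hx
  have h0 := hg0 x hx
  have h1 : 1 + g x ≠ 0 := fun h => hg1 x hx (by linarith)
  have hd := (hg x hx).hasDerivAt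
  set d := deriv g x
  have hL : HasDerivAt (fun y => g y * Real.exp (g y))
      (d * Real.exp (g x) + g x * (Real.exp (g x) * d)) x := hd.mul hd.exp
  have hR : HasDerivAt (fun y => C * y) C x := by
    simpa using (hasDerivAt_id x).const_mul C
  have heq : (fun y => g y * Real.exp (g y)) =ᶠ[nhds x] fun y => C * y := by
    filter_upwards [hI.mem_nhds hx] with y hy using hgeq y hy
  have hC := hL.unique (hR.congr_of_eventuallyEq heq)
  have hode : x * d * (1 + g x) = g x := by
    apply mul_right_cancel₀ (Real.exp_pos (g x)).ne'
    linear_combination x * hC - hgeq x hx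
  have hxd : x * d = g x / (1 + g x) := by
    rw [eq_div_iff h1, hode]
  have hw : HasDerivAt (fun y : ℝ => (y / 2) * (1 + 1 / g y))
      (1 / 2 * (1 + 1 / g x) + x / 2 * (-d / g x ^ 2)) x := by
    have hinv : HasDerivAt (fun y => 1 + 1 / g y) (-d / g x ^ 2) x := by
      simpa only [one_div] using (hd.fun_inv h0).const_add 1
    exact ((hasDerivAt_id x).div_const 2).mul hinv
  have hw' : 1 / 2 * (1 + 1 / g x) + x / 2 * (-d / g x ^ 2) - 1
      = -(g x / (2 * (1 + g x))) := by
    have : x / 2 * (-d / g x ^ 2) = -(x * d) / (2 * g x ^ 2) := by ring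
    rw [this, hxd]
    field_simp
    ring
  rw [hw.deriv, hw']
  field_simp
  ring
end

section
/- Define Dawson's integral daw(x) = e^{−x²} ∫₀^x e^{s²} ds for x ∈ ℝ. Then the function ψ(t) = (1/π) arctan( (2/√π) e^{t²/2} daw(t/√2) ) + 1/2 is differentiable on ℝ with derivative ψ'(t) = √(2/π) · e^{t²/2} / ( 4 e^{t²} daw(t/√2)² + π ) > 0 for all t ∈ ℝ. -/
/-! Since `daw` carries the factor `exp (-x ^ 2)`, multiplying `daw (u / √2)` by `exp (u ^ 2 / 2)`
leaves just the primitive `∫ s in 0..u/√2, exp (s ^ 2)` (`exp_mul_daw`), whose derivative is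
`exp (u ^ 2 / 2) / √2` by the fundamental theorem of calculus (`hasDerivAt_exp_mul_daw`). The chain
rule for `arctan` then gives the formula, after clearing the factor `π` from the denominator
`1 + (4 / π) exp (t ^ 2) daw (t / √2) ^ 2`. -/

/-- Dawson's integral `daw(x) = e^{−x²} ∫₀^x e^{s²} ds`. -/
noncomputable def daw (x : ℝ) : ℝ := Real.exp (-x ^ 2) * ∫ s in (0 : ℝ)..x, Real.exp (s ^ 2)

theorem div_sqrt_two_sq (u : ℝ) : (u / Real.sqrt 2) ^ 2 = u ^ 2 / 2 := by
  rw [div_pow, Real.sq_sqrt (by norm_num)]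

theorem exp_mul_daw (u : ℝ) :
    Real.exp (u ^ 2 / 2) * daw (u / Real.sqrt 2)
      = ∫ s in (0 : ℝ)..(u / Real.sqrt 2), Real.exp (s ^ 2) := by
  rw [daw, div_sqrt_two_sq, ← mul_assoc, ← Real.exp_add, add_neg_cancel, Real.exp_zero, one_mul]

theorem hasDerivAt_exp_mul_daw (t : ℝ) :
    HasDerivAt (fun u : ℝ => Real.exp (u ^ 2 / 2) * daw (u / Real.sqrt 2))
      (Real.exp (t ^ 2 / 2) * (1 / Real.sqrt 2)) t := by
  simp only [exp_mul_daw]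
  have hc : Continuous fun s : ℝ => Real.exp (s ^ 2) := by fun_prop
  have h := (hc.integral_hasStrictDerivAt 0 (t / Real.sqrt 2)).hasDerivAt
  have h2 := h.comp t ((hasDerivAt_id t).div_const (Real.sqrt 2))
  rwa [div_sqrt_two_sq] at h2

/-- The function `ψ(t) = (1/π) arctan((2/√π) e^{t²/2} daw(t/√2)) + 1/2` is
differentiable on `ℝ` with derivative
`ψ'(t) = √(2/π) e^{t²/2} / (4 e^{t²} daw(t/√2)² + π) > 0` for all `t ∈ ℝ`. -/
theorem stmt19 (t : ℝ) :
    HasDerivAt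
      (fun u : ℝ =>
        (1 / Real.pi) * Real.arctan ((2 / Real.sqrt Real.pi) * Real.exp (u ^ 2 / 2)
          * daw (u / Real.sqrt 2)) + 1 / 2)
      (Real.sqrt (2 / Real.pi) * Real.exp (t ^ 2 / 2)
        / (4 * Real.exp (t ^ 2) * daw (t / Real.sqrt 2) ^ 2 + Real.pi)) t ∧
    0 < Real.sqrt (2 / Real.pi) * Real.exp (t ^ 2 / 2)
        / (4 * Real.exp (t ^ 2) * daw (t / Real.sqrt 2) ^ 2 + Real.pi) := by
  have hpi := Real.pi_pos
  have hden : 0 < 4 * Real.exp (t ^ 2) * daw (t / Real.sqrt 2) ^ 2 + Real.pi := by positivity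
  refine ⟨?_, by positivity⟩
  have h := (((hasDerivAt_exp_mul_daw t).const_mul (2 / Real.sqrt Real.pi)).arctan.const_mul
    (1 / Real.pi)).add_const (1 / 2)
  simp only [← mul_assoc] at h
  refine h.congr_deriv ?_
  have hE : Real.exp (t ^ 2) = Real.exp (t ^ 2 / 2) ^ 2 := by
    rw [← Real.exp_nat_mul]; congr 1; push_cast; ring
  have h2 : Real.sqrt (2 / Real.pi) = 2 / Real.sqrt Real.pi * (1 / Real.sqrt 2) := by
    have h2s : Real.sqrt 2 * Real.sqrt 2 = 2 := Real.mul_self_sqrt (by norm_num)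
    rw [Real.sqrt_div (by norm_num)]
    field_simp
    linarith
  have hsq : 1 + (2 / Real.sqrt Real.pi * Real.exp (t ^ 2 / 2) * daw (t / Real.sqrt 2)) ^ 2
      = (4 * Real.exp (t ^ 2) * daw (t / Real.sqrt 2) ^ 2 + Real.pi) / Real.pi := by
    rw [mul_pow, mul_pow, div_pow, Real.sq_sqrt hpi.le, hE]
    field_simp
    ring
  rw [hsq, h2]
  field_simp
end
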